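/- arXiv:2510.20530 — 2 statements merged into one kernel-verified Lean document; each statement's English description precedes it below -/
import Mathlib

section
/- Fix an integer d ≥ 2 and a unit vector ψ ∈ ℂ^d. Consider single-call probabilistic protocols (S, S_ch) with d_F = d, together with p ∈ ℝ, satisfying S ⋆ U = p · Uᵀ|ψ⟩⟨ψ|U̅ for all U ∈ SU(d) (exact probabilistic unitary transposition on the known pure state ψ). Then every such protocol satisfies p ≤ 1/d, and the bound is attained: the matrix S = |ψ⟩⟨ψ|_O ⊗ Φ_{IF} (with |ψ⟩⟨ψ| on the factor O and Φ on the factors I, F) is a superinstrument element of such a protocol achieving p = 1/d. Hence the maximal success probability of exact probabilistic unitary transposition on a known pure state with a single call of the unitary is 1/d. -/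
open Matrix Kronecker BigOperators ComplexOrder

noncomputable section

/-- Entrywise complex conjugate `U̅` of a matrix. -/
def mconj {d : ℕ} (U : Matrix (Fin d) (Fin d) ℂ) : Matrix (Fin d) (Fin d) ℂ :=
  U.map (starRingEnd ℂ)

/-- Rank-one outer product `|v⟩⟨v|`. -/
def outer {n : Type*} (v : n → ℂ) : Matrix n n ℂ :=
  Matrix.vecMulVec v (star v)

/-- Choi vector `|U⟩⟩ = Σ_i e_i ⊗ U e_i`. -/
def choiVec {d : ℕ} (U : Matrix (Fin d) (Fin d) ℂ) : Fin d × Fin d → ℂ :=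
  fun p => U p.2 p.1

/-- `|U⟩⟩⟨⟨U|`. -/
def choiProj {d : ℕ} (U : Matrix (Fin d) (Fin d) ℂ) :
    Matrix (Fin d × Fin d) (Fin d × Fin d) ℂ :=
  outer (choiVec U)

/-- Partial trace over the first tensor factor. -/
def ptrLeft {α β : Type*} [Fintype α] (S : Matrix (α × β) (α × β) ℂ) :
    Matrix β β ℂ :=
  fun b b' => ∑ a, S (a, b) (a, b')

/-- Partial trace over the second (last) tensor factor. -/
def ptrRight {α β : Type*} [Fintype β] (S : Matrix (α × β) (α × β) ℂ) :
    Matrix α α ℂ :=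
  fun a a' => ∑ b, S (a, b) (a', b)

/-- Action `S ⋆ U := Tr_{IO}[ S · (|U̅⟩⟩⟨⟨U̅|_{IO} ⊗ 1_F) ]` of a single-call supermap
on the unitary channel given by `U`; `S` lives on `I ⊗ O ⊗ F`. -/
def act {d dF : ℕ}
    (S : Matrix ((Fin d × Fin d) × Fin dF) ((Fin d × Fin d) × Fin dF) ℂ)
    (U : Matrix (Fin d) (Fin d) ℂ) : Matrix (Fin dF) (Fin dF) ℂ :=
  ptrLeft (S * (choiProj (mconj U) ⊗ₖ (1 : Matrix (Fin dF) (Fin dF) ℂ)))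

/-- A single-call probabilistic protocol: `0 ≤ S ≤ S_ch` with
`Tr_F(S_ch) = σ ⊗ 1_d`, `σ ≥ 0`, `Tr σ = 1`. -/
def IsProtocol {d dF : ℕ}
    (S Sch : Matrix ((Fin d × Fin d) × Fin dF) ((Fin d × Fin d) × Fin dF) ℂ) : Prop :=
  S.PosSemidef ∧ (Sch - S).PosSemidef ∧
    ∃ σ : Matrix (Fin d) (Fin d) ℂ, σ.PosSemidef ∧ σ.trace = 1 ∧
      ptrRight Sch = σ ⊗ₖ (1 : Matrix (Fin d) (Fin d) ℂ)

/-- The maximally entangled unit vector `|φ⁺⟩ = (1/√d) Σ_i e_i ⊗ e_i`. -/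
def maxEntVec (d : ℕ) : Fin d × Fin d → ℂ :=
  fun p => if p.1 = p.2 then ((1 / Real.sqrt d : ℝ) : ℂ) else 0

/-- `Φ = |φ⁺⟩⟨φ⁺|`. -/
def Phi (d : ℕ) : Matrix (Fin d × Fin d) (Fin d × Fin d) ℂ := outer (maxEntVec d)

/-- The matrix `|ψ⟩⟨ψ|_O ⊗ Φ_{IF}` (with `|ψ⟩⟨ψ|` on the factor `O` and `Φ` on the
factors `I`, `F`), written on the index order `(I × O) × F`. -/
def transOpt {d : ℕ} (ψ : Fin d → ℂ) :
    Matrix ((Fin d × Fin d) × Fin d) ((Fin d × Fin d) × Fin d) ℂ :=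
  fun x y => outer ψ x.1.2 y.1.2 * Phi d (x.1.1, x.2) (y.1.1, y.2)

/-- Real quadratic form of a matrix. -/
def Qf {n : Type*} [Fintype n] (S : Matrix n n ℂ) (x : n → ℂ) : ℝ := (star x ⬝ᵥ S *ᵥ x).re

lemma Qf_par {n : Type*} [Fintype n] (S : Matrix n n ℂ) (x y : n → ℂ) :
    Qf S (x + y) + Qf S (x - y) = 2 * Qf S x + 2 * Qf S y := by
  simp only [Qf, star_add, star_sub, mulVec_add, mulVec_sub, add_dotProduct, sub_dotProduct,
    dotProduct_add, dotProduct_sub, Complex.add_re, Complex.sub_re]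
  ring

lemma Qf_nonneg {n : Type*} [Fintype n] {S : Matrix n n ℂ} (hS : S.PosSemidef) (x : n → ℂ) :
    0 ≤ Qf S x := by
  have := hS.dotProduct_mulVec_nonneg x
  exact (Complex.le_def.1 this).1

lemma Qf_ker {n : Type*} [Fintype n] {S : Matrix n n ℂ} (hS : S.PosSemidef) {x : n → ℂ}
    (h : Qf S x = 0) : S *ᵥ x = 0 := by
  rw [← hS.dotProduct_mulVec_zero_iff]
  have := hS.dotProduct_mulVec_nonneg x
  have h2 := (Complex.le_def.1 this).2
  apply Complex.ext
  · exact h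
  · simpa using h2.symm

lemma Qf_single {n : Type*} [Fintype n] [DecidableEq n] (S : Matrix n n ℂ) (a : n) :
    Qf S (Pi.single a 1) = (S a a).re := by
  have : star (Pi.single a (1 : ℂ) : n → ℂ) = Pi.single a 1 := by
    rw [← Pi.single_star, star_one]
  simp [Qf, this]

lemma sign_avg {n ι : Type*} [Fintype n] [DecidableEq ι] (S : Matrix n n ℂ) (y : ι → n → ℂ)
    (C : ℝ) (s : Finset ι) : ∀ x : n → ℂ,
    (∀ ε : ι → ℂ, (∀ o, ε o = 1 ∨ ε o = -1) → Qf S (x + ∑ o ∈ s, ε o • y o) = C) →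
    Qf S x + ∑ o ∈ s, Qf S (y o) = C := by
  induction s using Finset.induction_on with
  | empty => intro x h; simpa using h (fun _ => 1) (fun _ => Or.inl rfl)
  | insert a s ha ih =>
    intro x h
    have key : ∀ c : ℂ, (c = 1 ∨ c = -1) → Qf S (x + c • y a) + ∑ o ∈ s, Qf S (y o) = C := by
      intro c hc
      apply ih
      intro ε hε
      rw [← h (Function.update ε a c)]
      · rw [Finset.sum_insert ha, Function.update_self, add_assoc]
        congr 3
        apply Finset.sum_congr rfl
        intro o ho
        rw [Function.update_of_ne]
        rintro rfl
        exact ha ho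
      · intro o
        by_cases h : o = a
        · subst h; simpa using hc
        · simpa [Function.update_of_ne h] using hε o
    have h1 := key 1 (Or.inl rfl)
    have h2 := key (-1) (Or.inr rfl)
    have h3 := Qf_par S x (y a)
    rw [one_smul] at h1
    rw [neg_one_smul, ← sub_eq_add_neg] at h2
    rw [Finset.sum_insert ha]
    linarith

/-- The vector `U̅ ⊗ g`. -/
def XX {d : ℕ} (U : Matrix (Fin d) (Fin d) ℂ) (g : Fin d → ℂ) : (Fin d × Fin d) × Fin d → ℂ :=
  fun a => star (U a.1.2 a.1.1) * g a.2

/-- The vector `U̅ ⊗ g` restricted to one row. -/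
def YY {d : ℕ} (o : Fin d) (u g : Fin d → ℂ) : (Fin d × Fin d) × Fin d → ℂ :=
  fun a => if a.1.2 = o then star (u a.1.1) * g a.2 else 0

lemma YY_single {d : ℕ} (o j f : Fin d) :
    YY o (Pi.single j 1) (Pi.single f 1) = Pi.single ((j, o), f) 1 := by
  ext ⟨⟨i, o'⟩, f'⟩
  simp only [YY, Pi.single_apply, Prod.mk.injEq]
  split_ifs <;> simp_all

/-- Hypothesis on the quadratic form. -/
def GoodQ {d : ℕ} (S : Matrix ((Fin d × Fin d) × Fin d) ((Fin d × Fin d) × Fin d) ℂ)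
    (z : Fin d) (p : ℝ) : Prop :=
  ∀ U : Matrix (Fin d) (Fin d) ℂ, U ∈ Matrix.unitaryGroup (Fin d) ℂ → ∀ g : Fin d → ℂ,
    Qf S (XX U g) = p * Complex.normSq (∑ f, star (g f) * U z f)

lemma rows_sum {d : ℕ} {S : Matrix ((Fin d × Fin d) × Fin d) ((Fin d × Fin d) × Fin d) ℂ}
    {z : Fin d} {p : ℝ} (h : GoodQ S z p) (U : Matrix (Fin d) (Fin d) ℂ)
    (hU : U ∈ Matrix.unitaryGroup (Fin d) ℂ) (g : Fin d → ℂ) :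
    ∑ o, Qf S (YY o (U o) g) = p * Complex.normSq (∑ f, star (g f) * U z f) := by
  have := sign_avg S (fun o => YY o (U o) g) (p * Complex.normSq (∑ f, star (g f) * U z f))
    Finset.univ 0 ?_
  · simpa [Qf] using this
  intro ε hε
  have hr : ∀ o, star (ε o) = ε o := by
    intro o; rcases hε o with h | h <;> simp [h]
  have hs : ∀ o, ε o * ε o = 1 := by
    intro o; rcases hε o with h | h <;> simp [h]
  have hD : Matrix.diagonal ε * U ∈ Matrix.unitaryGroup (Fin d) ℂ := by
    apply mul_mem _ hU
    rw [Matrix.mem_unitaryGroup_iff, Matrix.star_eq_conjTranspose, Matrix.diagonal_conjTranspose,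
      Matrix.diagonal_mul_diagonal]
    rw [← Matrix.diagonal_one]
    congr 1
    ext o
    simp only [Pi.star_apply, hr, hs]
  have h1 := h _ hD g
  have e1 : XX (Matrix.diagonal ε * U) g = 0 + ∑ o, ε o • YY o (U o) g := by
    ext ⟨⟨i, o'⟩, f'⟩
    simp only [XX, YY, Matrix.diagonal_mul, star_mul', hr, zero_add, Finset.sum_apply,
      Pi.smul_apply, smul_eq_mul, mul_ite, mul_zero, Finset.sum_ite_eq, Finset.mem_univ, if_true]
    ring
  rw [← e1, h1]
  congr 1
  have : (∑ f, star (g f) * (Matrix.diagonal ε * U) z f) = ε z * ∑ f, star (g f) * U z f := by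
    rw [Finset.mul_sum]
    apply Finset.sum_congr rfl
    intro f _
    rw [Matrix.diagonal_mul]; ring
  rw [this, Complex.normSq_mul]
  rcases hε z with h | h <;> simp [h]

lemma perm_sum {d : ℕ} {S : Matrix ((Fin d × Fin d) × Fin d) ((Fin d × Fin d) × Fin d) ℂ}
    {z : Fin d} {p : ℝ} (h : GoodQ S z p) (π : Equiv.Perm (Fin d)) (f : Fin d) :
    ∑ o, (S ((π o, o), f) ((π o, o), f)).re = if π z = f then p else 0 := by
  have hU : (Matrix.of fun o i => (Pi.single (π o) (1 : ℂ) : Fin d → ℂ) i) ∈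
      Matrix.unitaryGroup (Fin d) ℂ := by
    rw [Matrix.mem_unitaryGroup_iff]
    ext i j
    simp [Matrix.mul_apply, Matrix.star_apply, Pi.single_apply, Matrix.one_apply, eq_comm]
  have := rows_sum h _ hU (Pi.single f 1)
  have e : ∀ o, ((Matrix.of fun o i => (Pi.single (π o) (1 : ℂ) : Fin d → ℂ) i) o) =
    (Pi.single (π o) (1 : ℂ) : Fin d → ℂ) := fun o => rfl
  simp only [e, YY_single, Qf_single] at this
  rw [this]
  simp only [Pi.single_apply]
  by_cases h : π z = f
  · subst h
    simp
  · simp [h, Ne.symm h]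

lemma diag_nonneg' {n : Type*} [Fintype n] [DecidableEq n] {S : Matrix n n ℂ}
    (hS : S.PosSemidef) (a : n) : 0 ≤ (S a a).re := by
  rw [← Qf_single]; exact Qf_nonneg hS _

lemma zero_of_ne {d : ℕ} {S : Matrix ((Fin d × Fin d) × Fin d) ((Fin d × Fin d) × Fin d) ℂ}
    (hS : S.PosSemidef) {z : Fin d} {p : ℝ} (h : GoodQ S z p) {o i j f : Fin d} (ho : o ≠ z)
    (hij : i ≠ j) (hif : i ≠ f) : (S ((j, o), f) ((j, o), f)).re = 0 := by
  let π : Equiv.Perm (Fin d) := Equiv.swap (Equiv.swap z i o) j * Equiv.swap z i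
  have hz : π z = i := by
    simp only [π, Equiv.Perm.mul_apply, Equiv.swap_apply_left]
    apply Equiv.swap_apply_of_ne_of_ne _ hij
    intro h
    apply ho
    have := congrArg (Equiv.swap z i) h
    simpa using this.symm
  have hoj : π o = j := by
    simp [π]
  have h1 := perm_sum h π f
  rw [hz, if_neg hif, Finset.sum_eq_zero_iff_of_nonneg (fun _ _ => diag_nonneg' hS _)] at h1
  have := h1 o (Finset.mem_univ _)
  rwa [hoj] at this

lemma zero_two {S : Matrix ((Fin 2 × Fin 2) × Fin 2) ((Fin 2 × Fin 2) × Fin 2) ℂ}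
    (hS : S.PosSemidef) {p : ℝ} (h : GoodQ S 0 p) (j f : Fin 2) (hjf : j ≠ f) :
    (S ((j, 1), f) ((j, 1), f)).re = 0 := by
  have hd : ∀ j : Fin 2, S *ᵥ Pi.single ((j, 1), j) 1 = 0 := by
    intro j
    apply Qf_ker hS
    rw [Qf_single]
    exact zero_of_ne hS h (i := j + 1) (by decide) (by fin_cases j <;> decide)
      (by fin_cases j <;> decide)
  have key : ∀ w : ℂ, star w * w = 1 →
      S *ᵥ (w • Pi.single ((0, 1), 1) 1 + star w • Pi.single ((1, 1), 0) 1) = 0 := by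
    intro w hw
    let r : ℂ := ((Real.sqrt 2)⁻¹ : ℝ)
    have hrr : r * r = 1 / 2 := by
      simp only [r]
      rw [← Complex.ofReal_mul, ← mul_inv, Real.mul_self_sqrt (by norm_num)]
      norm_num
    have hrs : star r = r := Complex.conj_ofReal _
    have hw' : w * star w = 1 := by rw [mul_comm]; exact hw
    let U : Matrix (Fin 2) (Fin 2) ℂ := !![r, r * w; r, - (r * w)]
    have hU : U ∈ Matrix.unitaryGroup (Fin 2) ℂ := by
      rw [Matrix.mem_unitaryGroup_iff]
      ext i j
      fin_cases i <;> fin_cases j <;>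
        simp only [U, Matrix.mul_apply, Fin.sum_univ_two, Matrix.star_apply, Fin.zero_eta,
          Fin.mk_one, Matrix.of_apply, Matrix.cons_val', Matrix.cons_val_zero,
          Matrix.cons_val_one, Matrix.cons_val_fin_one, star_neg, star_mul', hrs,
          Matrix.one_apply_eq, ne_eq, one_ne_zero, zero_ne_one, not_false_eq_true,
          Matrix.one_apply_ne]
      · linear_combination 2 * hrr + r * r * hw'
      · linear_combination - r * r * hw'
      · linear_combination - r * r * hw'
      · linear_combination 2 * hrr + r * r * hw'
    have h1 := rows_sum h U hU ![1, -w]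
    have e0 : (∑ f, star ((![1, -w] : Fin 2 → ℂ) f) * U 0 f) = 0 := by
      simp only [U, Fin.sum_univ_two, Matrix.of_apply, Matrix.cons_val', Matrix.cons_val_zero,
          Matrix.cons_val_one, Matrix.cons_val_fin_one, star_neg, star_one]
      linear_combination - r * hw
    rw [e0, Complex.normSq_zero, mul_zero,
      Finset.sum_eq_zero_iff_of_nonneg (fun _ _ => Qf_nonneg hS _)] at h1
    have h2 := Qf_ker hS (h1 1 (Finset.mem_univ _))
    have e1 : YY 1 (U 1) ![1, -w] = r • (Pi.single ((0, 1), 0) 1 + Pi.single ((1, 1), 1) 1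
        - (w • Pi.single ((0, 1), 1) 1 + star w • Pi.single ((1, 1), 0) 1)) := by
      ext ⟨⟨i, o'⟩, f'⟩
      fin_cases i <;> fin_cases o' <;> fin_cases f' <;>
        simp [YY, U, Pi.single_apply, -RCLike.star_def, hrs]
      rw [← Complex.star_def]
      linear_combination r * hw
    rw [e1, mulVec_smul, mulVec_sub, mulVec_add, hd, hd] at h2
    have hr0 : r ≠ 0 := by
      intro h0; rw [h0] at hrr; norm_num at hrr
    have h3 := (smul_eq_zero.1 h2).resolve_left hr0
    simpa using h3
  have k1 := key 1 (by simp)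
  have k2 := key Complex.I (by simp)
  simp only [mulVec_add, mulVec_smul, star_one, one_smul] at k1 k2
  have hI : star Complex.I = - Complex.I := Complex.conj_I
  rw [hI] at k2
  have z1 : S *ᵥ Pi.single ((0, 1), 1) 1 = 0 := by
    ext a
    have a1 := congrFun k1 a
    have a2 := congrFun k2 a
    simp only [Pi.add_apply, Pi.smul_apply, Pi.zero_apply, smul_eq_mul] at a1 a2 ⊢
    linear_combination (1 / 2 : ℂ) * a1 - Complex.I / 2 * a2 +
      (1 / 2 : ℂ) * ((S *ᵥ Pi.single ((0, 1), 1) 1) a - (S *ᵥ Pi.single ((1, 1), 0) 1) a) *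
        Complex.I_mul_I
  have z2 : S *ᵥ Pi.single ((1, 1), 0) 1 = 0 := by
    rw [z1, zero_add] at k1; exact k1
  rw [← Qf_single]
  fin_cases j <;> fin_cases f
  · exact absurd rfl hjf
  · simp only [Qf, Fin.zero_eta, Fin.mk_one, z1]; simp
  · simp only [Qf, Fin.zero_eta, Fin.mk_one, z2]; simp
  · exact absurd rfl hjf

lemma core {d : ℕ} (hd : 2 ≤ d)
    {S : Matrix ((Fin d × Fin d) × Fin d) ((Fin d × Fin d) × Fin d) ℂ}
    (hS : S.PosSemidef) {p : ℝ} (h : GoodQ S ⟨0, by omega⟩ p) (i : Fin d) :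
    (S ((i, ⟨0, by omega⟩), i) ((i, ⟨0, by omega⟩), i)).re = p := by
  have hz : ∀ o j f : Fin d, o ≠ ⟨0, by omega⟩ → (S ((j, o), f) ((j, o), f)).re = 0 := by
    intro o j f ho
    by_cases hjf : j = f
    · subst hjf
      have : Nontrivial (Fin d) := Fin.nontrivial_iff_two_le.2 hd
      obtain ⟨i, hi⟩ := exists_ne j
      exact zero_of_ne hS h ho hi hi
    · rcases hd.eq_or_lt with h2 | h3
      · subst h2
        have : o = 1 := by
          fin_cases o
          · exact absurd rfl ho
          · rfl
        subst this
        exact zero_two hS h j f hjf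
      · have : ∃ i : Fin d, i ∉ ({j, f} : Finset (Fin d)) := by
          by_contra! hc
          have : (Finset.univ : Finset (Fin d)) ⊆ {j, f} := fun x _ => hc x
          have := Finset.card_le_card this
          have h4 := Finset.card_le_two (a := j) (b := f)
          simp at this
          omega
        obtain ⟨i, hi⟩ := this
        simp only [Finset.mem_insert, Finset.mem_singleton, not_or] at hi
        exact zero_of_ne hS h ho hi.1 hi.2
  have h1 := perm_sum h (Equiv.swap ⟨0, by omega⟩ i) i
  rw [Equiv.swap_apply_left, if_pos rfl, Finset.sum_eq_single ⟨0, by omega⟩] at h1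
  · rwa [Equiv.swap_apply_left] at h1
  · intro o _ ho
    exact hz _ _ _ ho
  · simp

lemma core_bound {d : ℕ} (hd : 2 ≤ d)
    {S Sch : Matrix ((Fin d × Fin d) × Fin d) ((Fin d × Fin d) × Fin d) ℂ} {p : ℝ}
    (hp : IsProtocol S Sch) (h : GoodQ S ⟨0, by omega⟩ p) : p ≤ 1 / d := by
  obtain ⟨hS, hD, σ, hσ, htr, hpt⟩ := hp
  have key : ∀ i : Fin d, p ≤ (σ i i).re := by
    intro i
    have e := congrFun (congrFun hpt (i, ⟨0, by omega⟩)) (i, ⟨0, by omega⟩)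
    simp only [ptrRight, Matrix.kroneckerMap_apply, Matrix.one_apply_eq, mul_one] at e
    rw [← e, Complex.re_sum, ← core hd hS h i]
    refine le_trans ?_ (Finset.sum_le_sum (fun f _ => ?_ :
      ∀ f ∈ Finset.univ, (S ((i, ⟨0, by omega⟩), f) ((i, ⟨0, by omega⟩), f)).re ≤ _))
    · exact Finset.single_le_sum
        (f := fun f => (S ((i, ⟨0, by omega⟩), f) ((i, ⟨0, by omega⟩), f)).re)
        (fun f _ => diag_nonneg' hS _) (Finset.mem_univ i)
    · have := diag_nonneg' hD ((i, ⟨0, by omega⟩), f)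
      rw [Matrix.sub_apply, Complex.sub_re] at this
      linarith
  have hs := Finset.sum_le_sum (fun i (_ : i ∈ Finset.univ) => key i)
  have ht : ∑ i, (σ i i).re = 1 := by
    rw [← Complex.re_sum]
    have : ∑ i, σ i i = 1 := htr
    rw [this]; rfl
  rw [ht] at hs
  simp at hs
  have : (0 : ℝ) < d := by exact_mod_cast (by omega : 0 < d)
  rw [le_div_iff₀ this]
  linarith

lemma act_apply {d dF : ℕ}
    (S : Matrix ((Fin d × Fin d) × Fin dF) ((Fin d × Fin d) × Fin dF) ℂ)
    (U : Matrix (Fin d) (Fin d) ℂ) (f f' : Fin dF) :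
    act S U f f' = ∑ a, ∑ a', S (a, f) (a', f') * (star (U a'.2 a'.1) * U a.2 a.1) := by
  simp only [act, ptrLeft, Matrix.mul_apply, Fintype.sum_prod_type (α₁ := Fin d × Fin d),
    Matrix.kroneckerMap_apply, Matrix.one_apply, choiProj, outer, vecMulVec_apply, choiVec, mconj,
    Matrix.map_apply, Pi.star_apply, mul_ite, mul_one, mul_zero, Finset.sum_ite_eq',
    Finset.mem_univ, if_true]
  simp

lemma quad_act {d : ℕ}
    (S : Matrix ((Fin d × Fin d) × Fin d) ((Fin d × Fin d) × Fin d) ℂ)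
    (U : Matrix (Fin d) (Fin d) ℂ) (g : Fin d → ℂ) :
    star (XX U g) ⬝ᵥ S *ᵥ XX U g = star g ⬝ᵥ act S U *ᵥ g := by
  simp only [dotProduct, mulVec, act_apply, XX, Pi.star_apply, star_mul', star_star,
    Fintype.sum_prod_type (α₁ := Fin d × Fin d), Finset.mul_sum, Finset.sum_mul]
  rw [Finset.sum_comm]
  apply Finset.sum_congr rfl; intro f _
  symm
  rw [Finset.sum_comm]
  apply Finset.sum_congr rfl; intro a _
  rw [Finset.sum_comm]
  apply Finset.sum_congr rfl; intro a' _
  apply Finset.sum_congr rfl; intro f' _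
  ring

lemma quad_target {d : ℕ} (ψ : Fin d → ℂ) (p : ℝ)
    (U : Matrix (Fin d) (Fin d) ℂ) (g : Fin d → ℂ) :
    (star g ⬝ᵥ ((p : ℂ) • (Uᵀ * outer ψ * mconj U)) *ᵥ g).re =
      p * Complex.normSq (∑ f, star (g f) * (Uᵀ *ᵥ ψ) f) := by
  have e : Uᵀ * outer ψ * mconj U = vecMulVec (Uᵀ *ᵥ ψ) (star (Uᵀ *ᵥ ψ)) := by
    rw [outer, Matrix.mul_vecMulVec, Matrix.vecMulVec_mul, Matrix.star_mulVec]
    rfl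
  have e1 : star g ⬝ᵥ (Uᵀ *ᵥ ψ) = ∑ f, star (g f) * (Uᵀ *ᵥ ψ) f := rfl
  have e2 : star (Uᵀ *ᵥ ψ) ⬝ᵥ g = star (star g ⬝ᵥ (Uᵀ *ᵥ ψ)) := by
    simp only [dotProduct, star_sum, star_mul', Pi.star_apply, star_star]
    exact Finset.sum_congr rfl fun _ _ => mul_comm _ _
  rw [e, Matrix.smul_mulVec, dotProduct_smul, Matrix.vecMulVec_mulVec, e2, ← e1]
  generalize Uᵀ *ᵥ ψ = φ
  simp only [dotProduct_smul, MulOpposite.smul_eq_mul_unop, MulOpposite.unop_op, smul_eq_mul,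
    Complex.star_def, Complex.mul_conj, ← Complex.ofReal_mul, Complex.ofReal_re]

lemma exists_V {d : ℕ} (ψ : Fin d → ℂ) (hψ : star ψ ⬝ᵥ ψ = 1) (z : Fin d) :
    ∃ V ∈ Matrix.unitaryGroup (Fin d) ℂ, ∀ o, (Vᵀ *ᵥ ψ) o = if o = z then 1 else 0 := by
  let E := EuclideanSpace ℂ (Fin d)
  let v : Fin d → E := fun _ => WithLp.toLp 2 ψ
  have hin : ∀ x y : E, inner ℂ x y = ∑ s, star (x s) * y s := by
    intro x y
    rw [PiLp.inner_apply]
    exact Finset.sum_congr rfl fun _ _ => by simp [mul_comm]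
  have hv : Orthonormal ℂ (({z} : Set (Fin d)).domRestrict v) := by
    rw [orthonormal_iff_ite]
    intro i j
    have : i = j := Subsingleton.elim _ _
    rw [if_pos this, hin]
    exact hψ
  obtain ⟨b, hb⟩ := hv.exists_orthonormalBasis_extension_of_card_eq (by simp [E])
  have hbz : b z = v z := hb z rfl
  have hbo := orthonormal_iff_ite.1 b.orthonormal
  refine ⟨Matrix.of fun s o => star (b o s), ?_, ?_⟩
  · rw [Matrix.mem_unitaryGroup_iff']
    ext o o'
    have := hbo o' o
    rw [hin] at this
    simp only [Matrix.mul_apply, Matrix.star_apply, Matrix.of_apply, star_star, Matrix.one_apply]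
    simp only [eq_comm (a := o)]
    rw [← this]
    exact Finset.sum_congr rfl fun _ _ => mul_comm _ _
  · intro o
    rw [← hbo o z, hin, hbz]
    rfl

lemma exists_phase {d : ℕ} (hd : 2 ≤ d) (U : Matrix (Fin d) (Fin d) ℂ)
    (hU : U ∈ Matrix.unitaryGroup (Fin d) ℂ) :
    ∃ c : ℂ, star c * c = 1 ∧ c • U ∈ Matrix.specialUnitaryGroup (Fin d) ℂ := by
  have hdet : star U.det * U.det = 1 := (Matrix.det_of_mem_unitary hU).1
  obtain ⟨c, hc⟩ := IsAlgClosed.exists_pow_nat_eq (star U.det) (n := d) (by omega)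
  have hn : star c * c = 1 := by
    have h1 : ‖c‖ ^ d = 1 := by
      rw [← norm_pow, hc]
      have := congrArg norm hdet
      rw [norm_mul, norm_star, norm_one] at this
      rw [norm_star]
      nlinarith [norm_nonneg U.det]
    have h2 : ‖c‖ = 1 := (pow_eq_one_iff_of_nonneg (norm_nonneg _) (by omega)).1 h1
    rw [Complex.star_def, mul_comm, Complex.mul_conj, Complex.normSq_eq_norm_sq, h2]
    simp
  refine ⟨c, hn, ?_⟩
  rw [Matrix.mem_specialUnitaryGroup_iff]
  constructor
  · rw [Matrix.mem_unitaryGroup_iff'] at hU ⊢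
    rw [star_smul, Matrix.smul_mul, Matrix.mul_smul, smul_smul, hn, one_smul, hU]
  · rw [Matrix.det_smul, Fintype.card_fin, hc, hdet]

lemma ptr_conj {α β : Type*} [Fintype α] [Fintype β] [DecidableEq β] (A : Matrix α α ℂ)
    (T : Matrix (α × β) (α × β) ℂ) (B : Matrix α α ℂ) :
    ptrRight ((A ⊗ₖ (1 : Matrix β β ℂ)) * T * (B ⊗ₖ (1 : Matrix β β ℂ))) =
      A * ptrRight T * B := by
  ext a a'
  simp only [ptrRight, Matrix.mul_apply, Fintype.sum_prod_type, Matrix.kroneckerMap_apply,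
    Matrix.one_apply, mul_ite, mul_one, mul_zero, ite_mul, zero_mul, Finset.sum_ite_eq,
    Finset.sum_ite_eq', Finset.mem_univ, if_true, Finset.mul_sum, Finset.sum_mul]
  rw [Finset.sum_comm]
  apply Finset.sum_congr rfl; intro x _
  rw [Finset.sum_comm]

lemma Qf_conj {n : Type*} [Fintype n] (S K : Matrix n n ℂ) (x : n → ℂ) :
    Qf (K * S * Kᴴ) x = Qf S (Kᴴ *ᵥ x) := by
  rw [Qf, Qf, Matrix.star_mulVec, conjTranspose_conjTranspose, ← Matrix.dotProduct_mulVec,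
    Matrix.mulVec_mulVec, Matrix.mulVec_mulVec, Matrix.mul_assoc]

lemma Qf_phase {n : Type*} [Fintype n] (S : Matrix n n ℂ) (c : ℂ) (hc : star c * c = 1)
    (x : n → ℂ) : Qf S (star c • x) = Qf S x := by
  rw [Qf, Qf, star_smul, star_star, mulVec_smul, smul_dotProduct, dotProduct_smul, smul_smul,
    mul_comm, hc, one_smul]

lemma part1 {d : ℕ} (hd : 2 ≤ d) (ψ : Fin d → ℂ) (hψ : star ψ ⬝ᵥ ψ = 1)
    (S Sch : Matrix ((Fin d × Fin d) × Fin d) ((Fin d × Fin d) × Fin d) ℂ) (p : ℝ)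
    (hp : IsProtocol S Sch)
    (h : ∀ U : Matrix (Fin d) (Fin d) ℂ, U ∈ Matrix.specialUnitaryGroup (Fin d) ℂ →
          act S U = (p : ℂ) • (Uᵀ * outer ψ * mconj U)) : p ≤ 1 / d := by
  obtain ⟨V, hV, hVψ⟩ := exists_V ψ hψ ⟨0, by omega⟩
  obtain ⟨hS, hD, σ, hσ, htr, hpt⟩ := hp
  let A : Matrix (Fin d × Fin d) (Fin d × Fin d) ℂ := (1 : Matrix (Fin d) (Fin d) ℂ) ⊗ₖ Vᵀ
  let K : Matrix ((Fin d × Fin d) × Fin d) ((Fin d × Fin d) × Fin d) ℂ :=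
    A ⊗ₖ (1 : Matrix (Fin d) (Fin d) ℂ)
  have hVV : Vᵀ * Vᵀᴴ = 1 := by
    have := (Matrix.mem_unitaryGroup_iff'.1 hV)
    have h2 := congrArg Matrix.transpose this
    rw [Matrix.transpose_mul, Matrix.transpose_one] at h2
    exact h2
  have hP : IsProtocol (K * S * Kᴴ) (K * Sch * Kᴴ) := by
    refine ⟨hS.mul_mul_conjTranspose_same K, ?_, σ, hσ, htr, ?_⟩
    · rw [← Matrix.sub_mul, ← Matrix.mul_sub]
      exact hD.mul_mul_conjTranspose_same K
    · have : Kᴴ = Aᴴ ⊗ₖ (1 : Matrix (Fin d) (Fin d) ℂ) := by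
        simp only [K]
        rw [Matrix.conjTranspose_kronecker, conjTranspose_one]
      rw [this, ptr_conj, hpt]
      simp only [A]
      rw [Matrix.conjTranspose_kronecker, conjTranspose_one, ← Matrix.mul_kronecker_mul,
        ← Matrix.mul_kronecker_mul, Matrix.one_mul, Matrix.mul_one, Matrix.mul_one, hVV]
  refine core_bound hd hP ?_
  intro U hU g
  have hK : Kᴴ *ᵥ XX U g = XX (V * U) g := by
    ext ⟨⟨i, s⟩, f⟩
    simp only [K, A, XX, mulVec, dotProduct, Fintype.sum_prod_type, conjTranspose_apply,
      Matrix.kroneckerMap_apply, Matrix.one_apply, Matrix.transpose_apply, star_mul',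
      Matrix.mul_apply, star_sum, mul_ite, ite_mul, mul_one, one_mul, mul_zero, zero_mul,
      apply_ite (star : ℂ → ℂ), star_one, star_zero, Finset.sum_ite_eq, Finset.sum_ite_eq',
      Finset.mem_univ, if_true, Finset.sum_mul, Finset.sum_const_zero]
    rw [Finset.sum_eq_single i]
    · simp [mul_assoc]
    · intro j _ hj
      simp [hj]
    · simp
  obtain ⟨c, hc, hcU⟩ := exists_phase hd (V * U) (mul_mem hV hU)
  have hX : XX (c • (V * U)) g = star c • XX (V * U) g := by
    ext a
    simp only [XX, Matrix.smul_apply, smul_eq_mul, star_mul', Pi.smul_apply, mul_assoc]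
  rw [Qf_conj, hK, ← Qf_phase S c hc, ← hX, Qf, quad_act, h _ hcU, quad_target]
  congr 1
  have hv : Vᵀ *ᵥ ψ = Pi.single ⟨0, by omega⟩ 1 := by
    ext o; rw [hVψ, Pi.single_apply]
  have : ∀ f, ((c • (V * U))ᵀ *ᵥ ψ) f = c * U ⟨0, by omega⟩ f := by
    intro f
    rw [Matrix.transpose_smul, Matrix.transpose_mul, Matrix.smul_mulVec, ← Matrix.mulVec_mulVec,
      hv, Matrix.mulVec_single_one]
    rfl
  simp only [this]
  have e : (∑ f, star (g f) * (c * U ⟨0, by omega⟩ f)) =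
      c * ∑ f, star (g f) * U ⟨0, by omega⟩ f := by
    rw [Finset.mul_sum]
    exact Finset.sum_congr rfl fun _ _ => by ring
  rw [e, Complex.normSq_mul]
  have hn : Complex.normSq c = 1 := by
    rw [Complex.star_def, mul_comm, Complex.mul_conj] at hc
    exact_mod_cast hc
  rw [hn, one_mul]

lemma maxEnt_mul {d : ℕ} (hd : 2 ≤ d) (x y : Fin d × Fin d) :
    Phi d x y = if x.1 = x.2 then (if y.1 = y.2 then ((1 / d : ℝ) : ℂ) else 0) else 0 := by
  simp only [Phi, outer, vecMulVec_apply, maxEntVec, Pi.star_apply]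
  split_ifs
  · rw [Complex.star_def, Complex.conj_ofReal, ← Complex.ofReal_mul]
    congr 1
    rw [div_mul_div_comm, Real.mul_self_sqrt (by positivity), one_mul]
  · simp
  · simp
  · simp

/-- `A` on `O` times `Φ` on `I, F`. -/
def genO {d : ℕ} (A : Matrix (Fin d) (Fin d) ℂ) :
    Matrix ((Fin d × Fin d) × Fin d) ((Fin d × Fin d) × Fin d) ℂ :=
  fun x y => A x.1.2 y.1.2 * Phi d (x.1.1, x.2) (y.1.1, y.2)

lemma genO_psd {d : ℕ} {A : Matrix (Fin d) (Fin d) ℂ} (hA : A.PosSemidef) :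
    (genO A).PosSemidef := by
  have hPhi : (Phi d).PosSemidef := Matrix.posSemidef_vecMulVec_self_star _
  exact (hA.kronecker hPhi).submatrix
    (fun x : (Fin d × Fin d) × Fin d => (x.1.2, (x.1.1, x.2)))

lemma part2 {d : ℕ} (hd : 2 ≤ d) (ψ : Fin d → ℂ) (hψ : star ψ ⬝ᵥ ψ = 1) :
    (∃ Sch, IsProtocol (transOpt ψ) Sch ∧
        ∀ U : Matrix (Fin d) (Fin d) ℂ, U ∈ Matrix.specialUnitaryGroup (Fin d) ℂ →
          act (transOpt ψ) U = ((1 / d : ℝ) : ℂ) • (Uᵀ * outer ψ * mconj U)) := by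
  have hd0 : (d : ℂ) ≠ 0 := by exact_mod_cast (by omega : d ≠ 0)
  refine ⟨genO 1, ⟨genO_psd (A := outer ψ) (Matrix.posSemidef_vecMulVec_self_star _), ?_,
    ((1 / d : ℝ) : ℂ) • 1, ?_, ?_, ?_⟩, ?_⟩
  · have e : genO 1 - transOpt ψ = genO (1 - outer ψ) := by
      ext x y
      simp only [genO, transOpt, Matrix.sub_apply, sub_mul]
    rw [e]
    apply genO_psd
    have hH : (1 - outer ψ)ᴴ = 1 - outer ψ := by
      rw [conjTranspose_sub, conjTranspose_one, outer, conjTranspose_vecMulVec, star_star]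
    have hI : outer ψ * outer ψ = outer ψ := by
      rw [outer, Matrix.vecMulVec_mul_vecMulVec, hψ, one_smul]
    have : 1 - outer ψ = (1 - outer ψ)ᴴ * (1 - outer ψ) := by
      rw [hH, Matrix.sub_mul, Matrix.mul_sub, Matrix.mul_sub, hI]
      simp
    rw [this]
    exact Matrix.posSemidef_conjTranspose_mul_self _
  · apply Matrix.PosSemidef.one.smul
    rw [Complex.zero_le_real]
    positivity
  · rw [Matrix.trace_smul, Matrix.trace_one, Fintype.card_fin]
    push_cast
    rw [smul_eq_mul]
    field_simp
  · ext ⟨i, o⟩ ⟨i', o'⟩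
    simp only [ptrRight, genO, maxEnt_mul hd, Matrix.kroneckerMap_apply, Matrix.smul_apply,
      Matrix.one_apply, smul_eq_mul]
    by_cases h1 : o = o'
    · by_cases h2 : i = i'
      · simp [h1, h2]
      · simp [h1, h2, Ne.symm h2]
    · simp [h1]
  · intro U _
    ext f f'
    rw [act_apply]
    simp only [Fintype.sum_prod_type, transOpt, maxEnt_mul hd, outer, vecMulVec_apply]
    rw [Finset.sum_eq_single f, Matrix.smul_apply, Matrix.mul_apply]
    · simp only [Matrix.mul_apply, if_true, Matrix.transpose_apply, vecMulVec_apply, mconj,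
        Matrix.map_apply, smul_eq_mul, Finset.mul_sum, Finset.sum_mul]
      symm
      rw [Finset.sum_comm]
      apply Finset.sum_congr rfl; intro s _
      symm
      rw [Finset.sum_eq_single f']
      · apply Finset.sum_congr rfl; intro t _
        simp only [if_true, Complex.star_def]
        ring
      · intro j _ hj
        simp [hj]
      · simp
    · intro j _ hj
      simp [hj]
    · simp

/-- **Optimal probabilistic exact unitary transposition on a known pure state,
single call.** Every protocol implementing `U ↦ p · Uᵀ|ψ⟩⟨ψ|U̅` for all `U ∈ SU(d)`
has `p ≤ 1/d`, and `S = |ψ⟩⟨ψ|_O ⊗ Φ_{IF}` achieves `p = 1/d`. -/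
theorem transposition_single_call_known_pure_state
    (d : ℕ) (hd : 2 ≤ d) (ψ : Fin d → ℂ) (hψ : star ψ ⬝ᵥ ψ = 1) :
    (∀ (S Sch : Matrix ((Fin d × Fin d) × Fin d) ((Fin d × Fin d) × Fin d) ℂ) (p : ℝ),
        IsProtocol S Sch →
        (∀ U : Matrix (Fin d) (Fin d) ℂ, U ∈ Matrix.specialUnitaryGroup (Fin d) ℂ →
          act S U = (p : ℂ) • (Uᵀ * outer ψ * mconj U)) →
        p ≤ 1 / d) ∧
    (∃ Sch, IsProtocol (transOpt ψ) Sch ∧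
        ∀ U : Matrix (Fin d) (Fin d) ℂ, U ∈ Matrix.specialUnitaryGroup (Fin d) ℂ →
          act (transOpt ψ) U = ((1 / d : ℝ) : ℂ) • (Uᵀ * outer ψ * mconj U)) := by
  exact ⟨fun S Sch p hp h => part1 hd ψ hψ S Sch p hp h, part2 hd ψ hψ⟩
end
end

section
/- Fix integers d ≥ 2 and m ≥ 1 and a unit vector ψ ∈ ℂ^m ⊗ ℂ^d, and let σ_B := Tr_A(|ψ⟩⟨ψ|) be the reduced state obtained by tracing out the first (ℂ^m) factor. Consider bipartite single-call probabilistic protocols (S, S_ch), together with p ∈ ℝ, satisfying S ⋆ U = p · (1_m ⊗ Uᵀ)|ψ⟩⟨ψ|(1_m ⊗ Uᵀ)† for all U ∈ SU(d) (exact probabilistic unitary transposition on one part of the known bipartite pure state ψ). Then every such protocol satisfies p ≤ 1/(d · λ_max(σ_B)), and this bound is attained by some protocol; i.e. the maximal success probability equals 1/(d · λ_max(σ_B)). -/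
open Matrix Kronecker BigOperators ComplexOrder

noncomputable section

/-- Action `S ⋆ U := Tr_{IO}[ S · (|U̅⟩⟩⟨⟨U̅|_{IO} ⊗ 1_{AF}) ]` of a bipartite
single-call supermap `S` on `I ⊗ O ⊗ A ⊗ F`, applied to the unitary channel `U`. -/
def actB {d m : ℕ}
    (S : Matrix ((Fin d × Fin d) × (Fin m × Fin d)) ((Fin d × Fin d) × (Fin m × Fin d)) ℂ)
    (U : Matrix (Fin d) (Fin d) ℂ) : Matrix (Fin m × Fin d) (Fin m × Fin d) ℂ :=
  ptrLeft (S * (choiProj (mconj U) ⊗ₖ (1 : Matrix (Fin m × Fin d) (Fin m × Fin d) ℂ)))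

/-- A bipartite single-call probabilistic protocol (auxiliary output dimension `m`):
`0 ≤ S ≤ S_ch` with `Tr_{AF}(S_ch) = σ ⊗ 1_d`, `σ ≥ 0`, `Tr σ = 1`. -/
def IsProtocolB {d m : ℕ}
    (S Sch : Matrix ((Fin d × Fin d) × (Fin m × Fin d)) ((Fin d × Fin d) × (Fin m × Fin d)) ℂ) :
    Prop :=
  S.PosSemidef ∧ (Sch - S).PosSemidef ∧
    ∃ σ : Matrix (Fin d) (Fin d) ℂ, σ.PosSemidef ∧ σ.trace = 1 ∧
      ptrRight Sch = σ ⊗ₖ (1 : Matrix (Fin d) (Fin d) ℂ)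

/-- Largest eigenvalue of a matrix: the supremum of the real parts of its spectrum
(for a positive semidefinite matrix this is the maximal eigenvalue, i.e. the
operator norm). -/
def lamMax {n : ℕ} (M : Matrix (Fin n) (Fin n) ℂ) : ℝ :=
  sSup (Complex.re '' spectrum ℂ M)


lemma circle_infinite : {z : ℂ | z * star z = 1}.Infinite := by
  apply Set.Infinite.of_image Complex.re
  apply (Set.Icc_infinite (show (-1:ℝ) < 1 by norm_num)).mono
  intro x hx
  have h0 : 0 ≤ 1 - x^2 := by nlinarith [hx.1, hx.2]
  refine ⟨⟨x, Real.sqrt (1 - x^2)⟩, ?_, rfl⟩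
  have := Real.mul_self_sqrt h0
  simp only [Set.mem_ofPred_eq]
  apply Complex.ext
  · simp; nlinarith
  · simp; ring

lemma quad_torus {d : ℕ} (a : Fin d → Fin d → ℂ)
    (h : ∀ u : Fin d → ℂ, (∀ i, u i * star (u i) = 1) → ∑ i, ∑ j, u i * u j * a i j = 0)
    (u : Fin d → ℂ) : ∑ i, ∑ j, u i * u j * a i j = 0 := by
  let P : MvPolynomial (Fin d) ℂ := ∑ i, ∑ j, MvPolynomial.X i * MvPolynomial.X j *
    MvPolynomial.C (a i j)
  have hP : P = 0 := by
    apply MvPolynomial.funext_set (fun _ => {z : ℂ | z * star z = 1}) (fun _ => circle_infinite)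
    intro x hx
    simpa [P] using h x (fun i => hx i (Set.mem_univ i))
  simpa [P] using congrArg (MvPolynomial.eval u) hP

lemma quad_unitary {d : ℕ} (hd : 0 < d)
    (B : Matrix (Fin d) (Fin d) ℂ →ₗ[ℂ] Matrix (Fin d) (Fin d) ℂ →ₗ[ℂ] ℂ)
    (h : ∀ U ∈ Matrix.specialUnitaryGroup (Fin d) ℂ, B U U = 0)
    (W : Matrix (Fin d) (Fin d) ℂ) (hW : W ∈ Matrix.unitaryGroup (Fin d) ℂ) : B W W = 0 := by
  obtain ⟨z, hz⟩ := IsAlgClosed.exists_pow_nat_eq W.det hd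
  have hdet : ‖W.det‖ = 1 := by
    have := Matrix.det_of_mem_unitary hW
    exact CStarRing.norm_of_mem_unitary this
  have hzn : ‖z‖ = 1 := by
    rw [← hz, norm_pow] at hdet
    exact (pow_eq_one_iff_of_nonneg (norm_nonneg _) hd.ne').1 hdet
  have hz0 : z ≠ 0 := by
    rintro rfl; simp at hzn
  have hzz : star z * z = 1 := by
    have := Complex.conj_mul' z
    rw [hzn] at this
    simpa using this
  have hzi : z⁻¹ = star z := inv_eq_of_mul_eq_one_left hzz
  have hmem : z⁻¹ • W ∈ Matrix.specialUnitaryGroup (Fin d) ℂ := by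
    rw [Matrix.mem_specialUnitaryGroup_iff]
    constructor
    · rw [Matrix.mem_unitaryGroup_iff] at hW ⊢
      rw [star_smul, Matrix.smul_mul, Matrix.mul_smul, hW, smul_smul, hzi, star_star, hzz, one_smul]
    · rw [Matrix.det_smul, Fintype.card_fin, ← hz, inv_pow]
      exact inv_mul_cancel₀ (pow_ne_zero _ hz0)
  have := h _ hmem
  simpa [hz0] using this

lemma quad_herm {d : ℕ} 
    (B : Matrix (Fin d) (Fin d) ℂ →ₗ[ℂ] Matrix (Fin d) (Fin d) ℂ →ₗ[ℂ] ℂ)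
    (h : ∀ U ∈ Matrix.unitaryGroup (Fin d) ℂ, B U U = 0)
    (H : Matrix (Fin d) (Fin d) ℂ) (hH : H.IsHermitian) : B H H = 0 := by
  have hs := hH.spectral_theorem
  rw [Unitary.conjStarAlgAut_apply] at hs
  set V := hH.eigenvectorUnitary
  have key : ∀ u : Fin d → ℂ, (V : Matrix (Fin d) (Fin d) ℂ) * diagonal u * star (V : Matrix (Fin d) (Fin d) ℂ)
      = ∑ i, u i • ((V : Matrix (Fin d) (Fin d) ℂ) * diagonal (Pi.single i 1) * star (V : Matrix (Fin d) (Fin d) ℂ)) := by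
    intro u
    have : diagonal u = ∑ i, u i • diagonal (Pi.single i (1:ℂ)) := by
      ext a b
      rw [Matrix.sum_apply]
      simp [Matrix.diagonal_apply, Pi.single_apply]
    rw [this, Finset.mul_sum, Finset.sum_mul]
    simp
  have exp : ∀ u : Fin d → ℂ, B (∑ i, u i • ((V : Matrix (Fin d) (Fin d) ℂ) * diagonal (Pi.single i 1) * star (V : Matrix (Fin d) (Fin d) ℂ))) (∑ i, u i • ((V : Matrix (Fin d) (Fin d) ℂ) * diagonal (Pi.single i 1) * star (V : Matrix (Fin d) (Fin d) ℂ)))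
     = ∑ i, ∑ j, u i * u j * B ((V : Matrix (Fin d) (Fin d) ℂ) * diagonal (Pi.single i 1) * star (V : Matrix (Fin d) (Fin d) ℂ)) ((V : Matrix (Fin d) (Fin d) ℂ) * diagonal (Pi.single j 1) * star (V : Matrix (Fin d) (Fin d) ℂ)) := by
    intro u
    simp only [map_sum, map_smul, LinearMap.sum_apply, LinearMap.smul_apply, smul_eq_mul, Finset.mul_sum]
    rw [Finset.sum_comm]
    refine Finset.sum_congr rfl fun i _ => Finset.sum_congr rfl fun j _ => ?_
    ring
  rw [hs, key, exp]
  apply quad_torus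
  intro u hu
  rw [← exp, ← key]
  apply h
  have hD : diagonal u ∈ Matrix.unitaryGroup (Fin d) ℂ := by
    rw [Matrix.mem_unitaryGroup_iff, Matrix.star_eq_conjTranspose, Matrix.diagonal_conjTranspose, Matrix.diagonal_mul_diagonal]
    rw [← Matrix.diagonal_one]
    congr 1
    ext i
    exact hu i
  exact mul_mem (mul_mem V.2 hD) (Unitary.star_mem V.2)

lemma quad_vanish {d : ℕ} (hd : 0 < d)
    (B : Matrix (Fin d) (Fin d) ℂ →ₗ[ℂ] Matrix (Fin d) (Fin d) ℂ →ₗ[ℂ] ℂ)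
    (h : ∀ U ∈ Matrix.specialUnitaryGroup (Fin d) ℂ, B U U = 0)
    (X : Matrix (Fin d) (Fin d) ℂ) : B X X = 0 := by
  have hH := quad_herm B (quad_unitary hd B h)
  let H := realPart X
  let K := imaginaryPart X
  have hX : X = (H : Matrix (Fin d) (Fin d) ℂ) + Complex.I • (K : Matrix (Fin d) (Fin d) ℂ) :=
    (realPart_add_I_smul_imaginaryPart X).symm
  have h1 : (H : Matrix (Fin d) (Fin d) ℂ).IsHermitian := H.2
  have h2 : (K : Matrix (Fin d) (Fin d) ℂ).IsHermitian := K.2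
  have e1 := hH _ h1
  have e2 := hH _ h2
  have e3 := hH _ (h1.add h2)
  simp only [map_add, LinearMap.add_apply] at e3
  rw [hX]
  simp only [map_add, LinearMap.add_apply, map_smul, LinearMap.smul_apply, smul_eq_mul]
  linear_combination (1 - Complex.I) * e1 + (-1 - Complex.I) * e2 + Complex.I * e3 + Complex.I_sq * B K K

def Tm {d m : ℕ} (ψ : Fin m × Fin d → ℂ) (j : Fin m × Fin d) :
    Matrix (Fin d) (Fin d) ℂ →ₗ[ℂ] ℂ where
  toFun X := ∑ g, X g j.2 * ψ (j.1, g)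
  map_add' X Y := by simp [add_mul, Finset.sum_add_distrib]
  map_smul' c X := by simp [Finset.mul_sum, mul_assoc]

lemma prop_of_SU {d m : ℕ} (hd : 2 ≤ d) (ψ : Fin m × Fin d → ℂ) (hψ : ψ ≠ 0)
    (L : Fin m × Fin d → Matrix (Fin d) (Fin d) ℂ →ₗ[ℂ] ℂ)
    (h : ∀ U ∈ Matrix.specialUnitaryGroup (Fin d) ℂ, ∀ j k,
      L j U * Tm ψ k U = L k U * Tm ψ j U) :
    ∃ c : ℂ, ∀ j X, L j X = c * Tm ψ j X := by
  have hq : ∀ j k X, L j X * Tm ψ k X = L k X * Tm ψ j X := by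
    intro j k X
    let B : Matrix (Fin d) (Fin d) ℂ →ₗ[ℂ] Matrix (Fin d) (Fin d) ℂ →ₗ[ℂ] ℂ :=
      LinearMap.mk₂ ℂ (fun X Y => L j X * Tm ψ k Y - L k X * Tm ψ j Y)
        (by intros; simp only [map_add]; ring) (by intros; simp only [map_smul, smul_eq_mul]; ring)
        (by intros; simp only [map_add]; ring) (by intros; simp only [map_smul, smul_eq_mul]; ring)
    have := quad_vanish (by omega) B (fun U hU => by
      simp [B, h U hU j k]) X
    simpa [B, sub_eq_zero] using this
  obtain ⟨⟨a0, g0⟩, h0⟩ := Function.ne_iff.1 hψ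
  simp only [Pi.zero_apply] at h0
  let f0 : Fin d := ⟨0, by omega⟩
  let f1 : Fin d := ⟨1, by omega⟩
  have hf : f0 ≠ f1 := by simp [f0, f1]
  have hT : ∀ f f', Tm ψ (a0, f') (Matrix.single g0 f 1) = if f = f' then ψ (a0, g0) else 0 := by
    intro f f'
    simp only [Tm, LinearMap.coe_mk, AddHom.coe_mk, Matrix.single_apply]
    split_ifs with hh <;> simp [hh]
  let c := L (a0, f0) (Matrix.single g0 f0 1) / ψ (a0, g0)
  refine ⟨c, ?_⟩
  let L' : Fin m × Fin d → Matrix (Fin d) (Fin d) ℂ →ₗ[ℂ] ℂ := fun j => L j - c • Tm ψ j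
  have hq' : ∀ j k X, L' j X * Tm ψ k X = L' k X * Tm ψ j X := by
    intro j k X
    simp only [L', LinearMap.sub_apply, LinearMap.smul_apply, smul_eq_mul]
    linear_combination hq j k X
  have hp : ∀ j k X Y, L' j X * Tm ψ k Y + L' j Y * Tm ψ k X
      = L' k X * Tm ψ j Y + L' k Y * Tm ψ j X := by
    intro j k X Y
    have e := hq' j k (X + Y)
    simp only [map_add] at e
    linear_combination e - hq' j k X - hq' j k Y
  have s0 : L' (a0, f0) (Matrix.single g0 f0 1) = 0 := by
    simp [L', hT, c, h0]
  have s1 : ∀ j, L' j (Matrix.single g0 f0 1) = 0 := by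
    intro j
    have := hq' j (a0, f0) (Matrix.single g0 f0 1)
    simpa [s0, hT, h0] using this
  have s2 : ∀ Y, L' (a0, f1) Y = 0 := by
    intro Y
    have := hp (a0, f1) (a0, f0) (Matrix.single g0 f0 1) Y
    simpa [s1, hT, h0, hf] using this
  have s3 : ∀ j, L' j (Matrix.single g0 f1 1) = 0 := by
    intro j
    have := hq' j (a0, f1) (Matrix.single g0 f1 1)
    simpa [s2, hT, h0] using this
  intro j Y
  have := hp j (a0, f1) (Matrix.single g0 f1 1) Y
  have := by simpa [s2, s3, hT, h0] using this
  simpa [L', sub_eq_zero] using this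

lemma lamMax_spec {d : ℕ} (hd : 0 < d) (M : Matrix (Fin d) (Fin d) ℂ) (hM : M.IsHermitian) :
    (((lamMax M : ℝ) : ℂ) • (1 : Matrix (Fin d) (Fin d) ℂ) - M).PosSemidef ∧
    ∃ φ : Fin d → ℂ, φ ≠ 0 ∧ M *ᵥ φ = ((lamMax M : ℝ) : ℂ) • φ := by
  have hne : Nonempty (Fin d) := ⟨⟨0, hd⟩⟩
  have hl : lamMax M = sSup (Set.range hM.eigenvalues) := by
    unfold lamMax
    rw [hM.spectrum_eq_image_range, Set.image_image]
    simp
  have hfin : (Set.range hM.eigenvalues).Finite := Set.finite_range _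
  constructor
  · have hs := hM.spectral_theorem
    rw [Unitary.conjStarAlgAut_apply] at hs
    set V := hM.eigenvectorUnitary
    have e : ((lamMax M : ℝ) : ℂ) • (1 : Matrix (Fin d) (Fin d) ℂ) - M =
       (V : Matrix (Fin d) (Fin d) ℂ) * diagonal (fun i => ((lamMax M - hM.eigenvalues i : ℝ) : ℂ)) *
         (V : Matrix (Fin d) (Fin d) ℂ)ᴴ := by
      have : diagonal (fun i => ((lamMax M - hM.eigenvalues i : ℝ) : ℂ)) =
        ((lamMax M : ℝ) : ℂ) • (1 : Matrix (Fin d) (Fin d) ℂ) - diagonal (RCLike.ofReal ∘ hM.eigenvalues) := by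
        ext i j
        by_cases hij : i = j
        · subst hij; simp
        · simp [hij]
      have hV : (V : Matrix (Fin d) (Fin d) ℂ) * (V : Matrix (Fin d) (Fin d) ℂ)ᴴ = 1 :=
        Matrix.mem_unitaryGroup_iff.1 V.2
      rw [this, mul_sub, sub_mul]
      rw [Matrix.star_eq_conjTranspose] at hs
      rw [Matrix.mul_smul, Matrix.smul_mul, mul_one, hV, ← hs]
    rw [e]
    apply Matrix.PosSemidef.mul_mul_conjTranspose_same
    apply Matrix.PosSemidef.diagonal
    intro i
    simp only [Pi.zero_apply, Complex.zero_le_real, sub_nonneg, hl]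
    exact le_csSup hfin.bddAbove ⟨i, rfl⟩
  · obtain ⟨i, hi⟩ := (Set.range_nonempty hM.eigenvalues).csSup_mem hfin
    refine ⟨⇑(hM.eigenvectorBasis i), ?_, ?_⟩
    · exact (WithLp.ofLp_eq_zero 2).ne.2 <| hM.eigenvectorBasis.orthonormal.ne_zero i
    · rw [hM.mulVec_eigenvectorBasis, hl, ← hi]
      rfl

lemma actB_apply {d m : ℕ}
    (S : Matrix ((Fin d × Fin d) × (Fin m × Fin d)) ((Fin d × Fin d) × (Fin m × Fin d)) ℂ)
    (U : Matrix (Fin d) (Fin d) ℂ) (b b' : Fin m × Fin d) :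
    actB S U b b' = ∑ x, ∑ y, S (x, b) (y, b') * (star (U y.2 y.1) * U x.2 x.1) := by
  unfold actB ptrLeft
  refine Finset.sum_congr rfl fun x _ => ?_
  rw [Matrix.mul_apply, Fintype.sum_prod_type]
  refine Finset.sum_congr rfl fun y _ => ?_
  simp only [Matrix.kroneckerMap_apply, Matrix.one_apply, mul_ite, mul_one, mul_zero,
    Finset.sum_ite_eq', Finset.mem_univ, if_true]
  simp [choiProj, outer, choiVec, mconj, Matrix.vecMulVec_apply]

lemma target_apply {d m : ℕ} (ψ : Fin m × Fin d → ℂ)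
    (U : Matrix (Fin d) (Fin d) ℂ) (b b' : Fin m × Fin d) :
    (((1 : Matrix (Fin m) (Fin m) ℂ) ⊗ₖ Uᵀ) * outer ψ *
                ((1 : Matrix (Fin m) (Fin m) ℂ) ⊗ₖ Uᵀ)ᴴ) b b' =
      Tm ψ b U * star (Tm ψ b' U) := by
  have h : ∀ b, (((1 : Matrix (Fin m) (Fin m) ℂ) ⊗ₖ Uᵀ) *ᵥ ψ) b = Tm ψ b U := by
    intro b
    simp only [Matrix.mulVec, dotProduct, Fintype.sum_prod_type, Matrix.kroneckerMap_apply,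
      Matrix.one_apply, Tm, LinearMap.coe_mk, AddHom.coe_mk, Matrix.transpose_apply]
    rw [Finset.sum_eq_single b.1]
    · simp
    · intro a _ ha
      simp [ha.symm]
    · simp
  rw [outer, Matrix.mul_vecMulVec, Matrix.vecMulVec_mul, Matrix.vecMulVec_apply, h,
    ← Matrix.star_mulVec, Pi.star_apply, h]

/-- The vector `|1⟩⟩_{IF} ⊗ |ψ⟩_{AO}`. -/
def svec {d m : ℕ} (ψ : Fin m × Fin d → ℂ) : (Fin d × Fin d) × (Fin m × Fin d) → ℂ :=
  fun z => Tm ψ z.2 (Matrix.single z.1.2 z.1.1 1)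

lemma svec_apply {d m : ℕ} (ψ : Fin m × Fin d → ℂ) (i o : Fin d) (a : Fin m) (f : Fin d) :
    svec ψ ((i, o), (a, f)) = if i = f then ψ (a, o) else 0 := by
  simp only [svec, Tm, LinearMap.coe_mk, AddHom.coe_mk, Matrix.single_apply]
  split_ifs with hh <;> simp [hh]

lemma svec_sum {d m : ℕ} (ψ : Fin m × Fin d → ℂ) (U : Matrix (Fin d) (Fin d) ℂ)
    (b : Fin m × Fin d) : ∑ x : Fin d × Fin d, U x.2 x.1 * svec ψ (x, b) = Tm ψ b U := by
  obtain ⟨a, f⟩ := b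
  rw [Fintype.sum_prod_type]
  simp only [svec_apply, mul_ite, mul_zero]
  rw [Finset.sum_comm]
  simp [Tm]

lemma actB_outer {d m : ℕ} (ψ : Fin m × Fin d → ℂ) (p : ℂ) (U : Matrix (Fin d) (Fin d) ℂ) :
    actB (p • outer (svec ψ)) U = p •
              (((1 : Matrix (Fin m) (Fin m) ℂ) ⊗ₖ Uᵀ) * outer ψ *
                ((1 : Matrix (Fin m) (Fin m) ℂ) ⊗ₖ Uᵀ)ᴴ) := by
  ext b b'
  rw [actB_apply, Matrix.smul_apply, target_apply, ← svec_sum, ← svec_sum, star_sum,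
    Finset.sum_mul_sum, smul_eq_mul, Finset.mul_sum]
  refine Finset.sum_congr rfl fun x _ => ?_
  rw [Finset.mul_sum]
  refine Finset.sum_congr rfl fun y _ => ?_
  simp [outer, Matrix.vecMulVec_apply]
  ring

lemma struct_S {d m : ℕ} (hd : 2 ≤ d) (ψ : Fin m × Fin d → ℂ) (hψ : ψ ≠ 0) (p : ℂ)
    (S : Matrix ((Fin d × Fin d) × (Fin m × Fin d)) ((Fin d × Fin d) × (Fin m × Fin d)) ℂ)
    (hS : S.PosSemidef)
    (h : ∀ U : Matrix (Fin d) (Fin d) ℂ, U ∈ Matrix.specialUnitaryGroup (Fin d) ℂ →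
            actB S U = p •
              (((1 : Matrix (Fin m) (Fin m) ℂ) ⊗ₖ Uᵀ) * outer ψ *
                ((1 : Matrix (Fin m) (Fin m) ℂ) ⊗ₖ Uᵀ)ᴴ)) :
    S = p • outer (svec ψ) := by
  obtain ⟨B, hB⟩ : ∃ B : Matrix ((Fin d × Fin d) × (Fin m × Fin d)) ((Fin d × Fin d) × (Fin m × Fin d)) ℂ,
      S = star B * B := by
    open scoped MatrixOrder Matrix.Norms.L2Operator in
    exact CStarAlgebra.nonneg_iff_eq_star_mul_self.mp hS.nonneg
  have hSB : ∀ z w, S z w = ∑ k, star (B k z) * B k w := by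
    intro z w
    rw [hB, Matrix.mul_apply]; rfl
  let L : (Fin d × Fin d) × (Fin m × Fin d) → Fin m × Fin d → Matrix (Fin d) (Fin d) ℂ →ₗ[ℂ] ℂ :=
    fun k b => 
     { toFun := fun X => ∑ x : Fin d × Fin d, X x.2 x.1 * star (B k (x, b))
       map_add' := fun X Y => by simp [add_mul, Finset.sum_add_distrib]
       map_smul' := fun c X => by simp [Finset.mul_sum, mul_assoc] }
  have hL : ∀ k b X, L k b X = ∑ x : Fin d × Fin d, X x.2 x.1 * star (B k (x, b)) :=
    fun _ _ _ => rfl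
  have hact : ∀ U b b', actB S U b b' = ∑ k, L k b U * star (L k b' U) := by
    intro U b b'
    simp only [actB_apply, hSB, hL, star_sum, Finset.sum_mul, Finset.mul_sum]
    rw [Finset.sum_comm]
    conv_rhs => rw [Finset.sum_comm]
    refine Finset.sum_congr rfl fun x _ => ?_
    conv_rhs => rw [Finset.sum_comm]
    refine Finset.sum_congr rfl fun y _ => ?_
    refine Finset.sum_congr rfl fun k _ => ?_
    simp
    ring
  have hM : ∀ U ∈ Matrix.specialUnitaryGroup (Fin d) ℂ, ∀ b b',
      ∑ k, L k b U * star (L k b' U) = p * (Tm ψ b U * star (Tm ψ b' U)) := by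
    intro U hU b b'
    rw [← hact, h U hU, Matrix.smul_apply, target_apply, smul_eq_mul]
  have hprop : ∀ k, ∀ U ∈ Matrix.specialUnitaryGroup (Fin d) ℂ, ∀ j l,
      L k j U * Tm ψ l U = L k l U * Tm ψ j U := by
    intro k U hU j l
    have hsum : ∑ k, (L k j U * Tm ψ l U - L k l U * Tm ψ j U) *
        star (L k j U * Tm ψ l U - L k l U * Tm ψ j U) = 0 := by
      have : ∀ k, (L k j U * Tm ψ l U - L k l U * Tm ψ j U) *
        star (L k j U * Tm ψ l U - L k l U * Tm ψ j U) =
          (L k j U * star (L k j U)) * (Tm ψ l U * star (Tm ψ l U))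
          - (L k j U * star (L k l U)) * (Tm ψ l U * star (Tm ψ j U))
          - (L k l U * star (L k j U)) * (Tm ψ j U * star (Tm ψ l U))
          + (L k l U * star (L k l U)) * (Tm ψ j U * star (Tm ψ j U)) := by
        intro k
        rw [star_sub, star_mul', star_mul']
        ring
      simp only [this, Finset.sum_add_distrib, Finset.sum_sub_distrib, ← Finset.sum_mul, hM U hU]
      ring
    have hz := (Finset.sum_eq_zero_iff_of_nonneg (fun k _ => mul_star_self_nonneg _)).1 hsum k
      (Finset.mem_univ k)
    rcases mul_eq_zero.1 hz with h1 | h1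
    · exact sub_eq_zero.1 h1
    · exact sub_eq_zero.1 (star_eq_zero.1 h1)
  choose c hc using fun k => prop_of_SU hd ψ hψ (L k) (hprop k)
  have hBc : ∀ k z, star (B k z) = c k * svec ψ z := by
    intro k z
    obtain ⟨⟨i, o⟩, b⟩ := z
    rw [svec, ← hc k, hL, Finset.sum_eq_single (i, o)]
    · simp
    · rintro ⟨i', o'⟩ _ hne
      rw [Matrix.single_apply, if_neg, zero_mul]
      rintro ⟨rfl, rfl⟩
      exact hne rfl
    · simp
  have hp : (∑ k, c k * star (c k)) = p := by
    obtain ⟨b, hb⟩ := Function.ne_iff.1 hψ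
    have := hM 1 (one_mem _) b b
    simp only [hc, star_mul'] at this
    have hT : Tm ψ b 1 = ψ b := by
      simp [Tm, Matrix.one_apply]
    rw [hT] at this
    have h2 : (∑ k, c k * star (c k)) * (ψ b * star (ψ b)) = p * (ψ b * star (ψ b)) := by
      rw [← this, Finset.sum_mul]
      exact Finset.sum_congr rfl fun k _ => by ring
    exact mul_right_cancel₀ (mul_ne_zero hb (star_ne_zero.2 hb)) h2
  ext z w
  rw [hSB, Matrix.smul_apply, outer, Matrix.vecMulVec_apply, ← hp, smul_eq_mul, Finset.sum_mul]
  refine Finset.sum_congr rfl fun k _ => ?_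
  have : B k w = star (c k * svec ψ w) := by rw [← hBc, star_star]
  rw [this, hBc, star_mul', Pi.star_apply]
  ring

lemma ptrRight_svec {d m : ℕ} (ψ : Fin m × Fin d → ℂ) :
    ptrRight (outer (svec ψ)) = (1 : Matrix (Fin d) (Fin d) ℂ) ⊗ₖ ptrLeft (outer ψ) := by
  ext ⟨i, o⟩ ⟨i', o'⟩
  simp only [ptrRight, outer, Matrix.vecMulVec_apply, Pi.star_apply, Fintype.sum_prod_type,
    svec_apply, Matrix.kroneckerMap_apply, ptrLeft, Matrix.one_apply]
  by_cases h : i = i'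
  · subst h; simp
  · simp [h, ite_and]
    refine Finset.sum_eq_zero fun a _ => ?_
    simp [Ne.symm h]

lemma ptrRight_posSemidef {α β : Type*} [Fintype α] [Fintype β] (M : Matrix (α × β) (α × β) ℂ)
    (hM : M.PosSemidef) : (ptrRight M).PosSemidef := by
  have : ptrRight M = ∑ b, M.submatrix (fun a => (a, b)) (fun a => (a, b)) := by
    ext a a'
    simp [ptrRight, Matrix.sum_apply]
  rw [this]
  exact Matrix.posSemidef_sum _ fun b _ => hM.submatrix _

lemma quad_kron {d : ℕ} (A C : Matrix (Fin d) (Fin d) ℂ) (φ : Fin d → ℂ) (i : Fin d) :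
    star (fun z : Fin d × Fin d => if z.1 = i then φ z.2 else 0) ⬝ᵥ
      ((A ⊗ₖ C) *ᵥ (fun z : Fin d × Fin d => if z.1 = i then φ z.2 else 0)) =
      A i i * (star φ ⬝ᵥ (C *ᵥ φ)) := by
  simp only [dotProduct, Matrix.mulVec, Fintype.sum_prod_type, Pi.star_apply,
    Matrix.kroneckerMap_apply]
  rw [Finset.sum_eq_single i]
  · rw [Finset.mul_sum]
    refine Finset.sum_congr rfl fun o _ => ?_
    rw [Finset.sum_eq_single i]
    · simp only [if_true, Finset.mul_sum]
      exact Finset.sum_congr rfl fun _ _ => by ring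
    · intro j _ hj; simp [hj]
    · simp
  · intro j _ hj; simp [hj]
  · simp

lemma trace_sB {d m : ℕ} (ψ : Fin m × Fin d → ℂ) :
    (ptrLeft (outer ψ)).trace = star ψ ⬝ᵥ ψ := by
  simp only [Matrix.trace, Matrix.diag, ptrLeft, outer, Matrix.vecMulVec_apply, dotProduct,
    Fintype.sum_prod_type]
  rw [Finset.sum_comm]
  exact Finset.sum_congr rfl fun _ _ => Finset.sum_congr rfl fun _ _ => mul_comm _ _

lemma herm_sB {d m : ℕ} (ψ : Fin m × Fin d → ℂ) : (ptrLeft (outer ψ)).IsHermitian := by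
  ext i j
  simp [ptrLeft, outer, Matrix.vecMulVec_apply, mul_comm]

/-- **Optimal probabilistic exact unitary transposition on part of a known bipartite
pure state, single call.** With `σ_B = Tr_A |ψ⟩⟨ψ|`, the set of achievable success
probabilities `p` of protocols implementing `U ↦ p · (1_m ⊗ Uᵀ)|ψ⟩⟨ψ|(1_m ⊗ Uᵀ)†`
for all `U ∈ SU(d)` has greatest element `1/(d · λ_max(σ_B))`. -/
theorem bipartite_transposition_single_call
    (d m : ℕ) (hd : 2 ≤ d) (hm : 1 ≤ m)
    (ψ : Fin m × Fin d → ℂ) (hψ : star ψ ⬝ᵥ ψ = 1) :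
    IsGreatest
      {p : ℝ |
        ∃ S Sch : Matrix ((Fin d × Fin d) × (Fin m × Fin d))
            ((Fin d × Fin d) × (Fin m × Fin d)) ℂ,
          IsProtocolB S Sch ∧
          ∀ U : Matrix (Fin d) (Fin d) ℂ, U ∈ Matrix.specialUnitaryGroup (Fin d) ℂ →
            actB S U = (p : ℂ) •
              (((1 : Matrix (Fin m) (Fin m) ℂ) ⊗ₖ Uᵀ) * outer ψ *
                ((1 : Matrix (Fin m) (Fin m) ℂ) ⊗ₖ Uᵀ)ᴴ)}
      (1 / ((d : ℝ) * lamMax (ptrLeft (outer ψ)))) := by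
  have hψ0 : ψ ≠ 0 := by
    rintro rfl; simp at hψ
  obtain ⟨hpsd, φ, hφ, heig⟩ := lamMax_spec (by omega) _ (herm_sB ψ)
  set σB := ptrLeft (outer ψ) with hσB
  set lam := lamMax σB with hlam
  have hd0 : (0:ℝ) < d := by exact_mod_cast (by omega : 0 < d)
  have hm0 : (0:ℝ) < m := by exact_mod_cast (by omega : 0 < m)
  have htr : σB.trace = 1 := by rw [hσB, trace_sB, hψ]
  have hdl : 1 ≤ (d:ℝ) * lam := by
    have h1 := hpsd.trace_nonneg
    rw [Matrix.trace_sub, Matrix.trace_smul, Matrix.trace_one, htr, Fintype.card_fin, smul_eq_mul] at h1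
    have h2 : (0:ℂ) ≤ ((lam * d - 1 : ℝ) : ℂ) := by push_cast; exact h1
    rw [Complex.zero_le_real] at h2
    linarith
  have hdl0 : 0 < (d:ℝ) * lam := by linarith
  constructor
  · set p : ℝ := 1 / ((d:ℝ) * lam) with hp
    have hp0 : 0 ≤ p := by positivity
    have hpc : (0:ℂ) ≤ (p:ℂ) := by exact_mod_cast hp0
    let S : Matrix ((Fin d × Fin d) × (Fin m × Fin d))
            ((Fin d × Fin d) × (Fin m × Fin d)) ℂ := (p:ℂ) • outer (svec ψ)
    let R : Matrix (Fin d × Fin d) (Fin d × Fin d) ℂ :=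
      (p:ℂ) • ((1 : Matrix (Fin d) (Fin d) ℂ) ⊗ₖ ((lam:ℂ) • (1 : Matrix (Fin d) (Fin d) ℂ) - σB))
    let q : ℝ := 1 / ((m:ℝ) * d)
    have hq0 : (0:ℂ) ≤ (q:ℂ) := by
      have : 0 ≤ q := by positivity
      exact_mod_cast this
    let C : Matrix (Fin m × Fin d) (Fin m × Fin d) ℂ := (q:ℂ) • 1
    have hCtr : C.trace = 1 := by
      simp only [C, Matrix.trace_smul, Matrix.trace_one, Fintype.card_prod, Fintype.card_fin, q,
        smul_eq_mul]
      have h1 : (m:ℂ) ≠ 0 := by exact_mod_cast hm0.ne'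
      have h2 : (d:ℂ) ≠ 0 := by exact_mod_cast hd0.ne'
      push_cast
      field_simp
    have hS : S.PosSemidef := (Matrix.posSemidef_vecMulVec_self_star _).smul hpc
    have hR : R.PosSemidef := (Matrix.PosSemidef.one.kronecker hpsd).smul hpc
    have hC : C.PosSemidef := Matrix.PosSemidef.one.smul hq0
    refine ⟨S, S + R ⊗ₖ C, ⟨hS, ?_, ((1 / d : ℝ) : ℂ) • 1, ?_, ?_, ?_⟩, fun U _ => actB_outer ψ p U⟩
    · rw [add_sub_cancel_left]
      exact hR.kronecker hC
    · refine Matrix.PosSemidef.one.smul ?_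
      have : 0 ≤ (1 / d : ℝ) := by positivity
      exact_mod_cast this
    · rw [Matrix.trace_smul, Matrix.trace_one, Fintype.card_fin]
      have h2 : (d:ℂ) ≠ 0 := by exact_mod_cast hd0.ne'
      simp [h2]
    · have e1 : ptrRight (S + R ⊗ₖ C) = (p:ℂ) • ptrRight (outer (svec ψ)) + C.trace • R := by
        ext x y
        simp only [ptrRight, S, Matrix.add_apply, Matrix.smul_apply, Finset.sum_add_distrib,
          smul_eq_mul, Finset.mul_sum, Matrix.kroneckerMap_apply, Matrix.trace, Matrix.diag,
          Finset.sum_mul]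
        congr 1
        exact Finset.sum_congr rfl fun _ _ => mul_comm _ _
      have e2 : p * lam = 1 / d := by
        have : lam ≠ 0 := by rintro h; simp [h] at hdl0
        rw [hp]; field_simp
      rw [e1, hCtr, one_smul, ptrRight_svec, ← e2]
      ext ⟨i, o⟩ ⟨i', o'⟩
      simp only [R, Matrix.add_apply, Matrix.smul_apply, Matrix.kroneckerMap_apply,
        Matrix.sub_apply, smul_eq_mul, ← hσB]
      push_cast
      ring
  · rintro p ⟨S, Sch, ⟨hS, hSch, σ, hσ, hσtr, hch⟩, hact⟩
    have hSs := struct_S hd ψ hψ0 p S hS hact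
    have h1 := ptrRight_posSemidef _ hSch
    have e1 : ptrRight (Sch - S) = σ ⊗ₖ (1 : Matrix (Fin d) (Fin d) ℂ) -
        (p:ℂ) • ((1 : Matrix (Fin d) (Fin d) ℂ) ⊗ₖ σB) := by
      rw [← hch, hσB, ← ptrRight_svec, hSs]
      ext x y
      simp [ptrRight, Finset.mul_sum]
    rw [e1] at h1
    have h2 : ∀ i, 0 ≤ σ i i * (star φ ⬝ᵥ φ) - p * (lam * (star φ ⬝ᵥ φ)) := by
      intro i
      have := h1.dotProduct_mulVec_nonneg (fun z : Fin d × Fin d => if z.1 = i then φ z.2 else 0)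
      rw [Matrix.sub_mulVec, Matrix.smul_mulVec, dotProduct_sub, dotProduct_smul, quad_kron,
        quad_kron, Matrix.one_mulVec, heig, dotProduct_smul, Matrix.one_apply_eq, one_mul,
        smul_eq_mul, smul_eq_mul] at this
      exact this
    have h3 := Finset.sum_nonneg (s := Finset.univ) fun i _ => h2 i
    have htr' : ∑ i, σ i i = 1 := hσtr
    rw [Finset.sum_sub_distrib, ← Finset.sum_mul, htr', Finset.sum_const, Finset.card_univ,
      Fintype.card_fin, nsmul_eq_mul] at h3
    have hn : 0 < star φ ⬝ᵥ φ := Matrix.dotProduct_star_self_pos_iff.2 hφ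
    obtain ⟨n, hn0, hnn⟩ : ∃ n : ℝ, 0 < n ∧ star φ ⬝ᵥ φ = (n:ℂ) := by
      rw [Complex.pos_iff] at hn
      refine ⟨(star φ ⬝ᵥ φ).re, hn.1, ?_⟩
      apply Complex.ext
      · simp
      · simp [← hn.2]
    rw [hnn] at h3
    have h4 : 0 ≤ 1 * n - d * (p * (lam * n)) := by
      exact_mod_cast h3
    rw [le_div_iff₀ hdl0]
    have : 0 ≤ n * (1 - p * (d * lam)) := by linarith
    have := nonneg_of_mul_nonneg_right this hn0
    linarith
end
end
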